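/- Let ι be a finite nonempty index type and q : ι → ℝ a probability vector. Then the infimum over all ℓ : ι → ℝ of F_q(ℓ) equals 0; equivalently, F_q(ℓ) ≥ 0 for all ℓ and for every ε > 0 there exists ℓ : ι → ℝ with F_q(ℓ) < ε. -/

import Mathlib

/-!
Nonnegativity is Gibbs' inequality, obtained termwise from `log x ≥ 1 - 1 / x`:
`q i * log (q i / s i) ≥ q i - s i`, and both `q` and `s = softmax ℓ` sum to `1`.

A `q` with zero entries is not a softmax, so the infimum need not be attained. It is approached by
the logits `log (q i + δ)`, whose softmax is `(q i + δ) / (1 + n * δ)` with `n` the cardinality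
of `ι`; this dominates `q i / (1 + n * δ)`, so the objective is at most `log (1 + n * δ) ≤ n * δ`.
-/

open Finset Real

/-- Softmax of a logit vector on a finite index type. -/
noncomputable def softmax {ι : Type*} [Fintype ι] (ℓ : ι → ℝ) (i : ι) : ℝ :=
  Real.exp (ℓ i) / ∑ j, Real.exp (ℓ j)

/-- Discrete KL objective `F_q(ℓ) = ∑ i, q i * log (q i / softmax ℓ i)`.
Terms with `q i = 0` contribute `0` automatically since `0 * x = 0`. -/
noncomputable def klObj {ι : Type*} [Fintype ι] (q ℓ : ι → ℝ) : ℝ :=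
  ∑ i, q i * Real.log (q i / softmax ℓ i)

lemma softmax_pos {ι : Type*} [Fintype ι] (ℓ : ι → ℝ) (i : ι) : 0 < softmax ℓ i :=
  div_pos (Real.exp_pos _) (Finset.sum_pos (fun j _ => Real.exp_pos (ℓ j)) ⟨i, Finset.mem_univ i⟩)

lemma sum_softmax {ι : Type*} [Fintype ι] [Nonempty ι] (ℓ : ι → ℝ) : ∑ i, softmax ℓ i = 1 := by
  unfold softmax
  rw [← Finset.sum_div]
  exact div_self (Finset.sum_pos (fun j _ => Real.exp_pos (ℓ j)) Finset.univ_nonempty).ne'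

lemma sub_le_mul_log_div {a s : ℝ} (ha : 0 ≤ a) (hs : 0 < s) : a - s ≤ a * Real.log (a / s) := by
  rcases ha.eq_or_lt with rfl | ha
  · simpa using hs.le
  · have h := mul_le_mul_of_nonneg_left (Real.one_sub_inv_le_log_of_pos (div_pos ha hs)) ha.le
    have e : a * (1 - (a / s)⁻¹) = a - s := by field_simp
    rwa [e] at h

theorem klObj_iInf_eq_zero
    {ι : Type*} [Fintype ι] [Nonempty ι]
    (q : ι → ℝ) (hq0 : ∀ i, 0 ≤ q i) (hq1 : ∑ i, q i = 1) :
    (∀ ℓ : ι → ℝ, 0 ≤ klObj q ℓ) ∧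
      (∀ ε : ℝ, 0 < ε → ∃ ℓ : ι → ℝ, klObj q ℓ < ε) := by
  constructor
  · intro ℓ
    calc (0 : ℝ) = ∑ i, (q i - softmax ℓ i) := by
          rw [Finset.sum_sub_distrib, hq1, sum_softmax, sub_self]
      _ ≤ klObj q ℓ :=
          Finset.sum_le_sum fun i _ => sub_le_mul_log_div (hq0 i) (softmax_pos ℓ i)
  · intro ε hε
    have hn : (0 : ℝ) < Fintype.card ι := by exact_mod_cast Fintype.card_pos
    -- `δ` is chosen so that `n * δ = ε / 2`.
    obtain ⟨δ, hδ, hnδ⟩ : ∃ δ : ℝ, 0 < δ ∧ Fintype.card ι * δ = ε / 2 :=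
      ⟨ε / 2 / Fintype.card ι, by positivity, by field_simp⟩
    have hpos : ∀ i, 0 < q i + δ := fun i => add_pos_of_nonneg_of_pos (hq0 i) hδ
    refine ⟨fun i => Real.log (q i + δ), ?_⟩
    have hsm : ∀ i, softmax (fun i => Real.log (q i + δ)) i = (q i + δ) / (1 + ε / 2) := by
      intro i
      simp only [softmax, Real.exp_log (hpos _), Finset.sum_add_distrib, hq1, Finset.sum_const,
        Finset.card_univ, nsmul_eq_mul, hnδ]
    calc klObj q (fun i => Real.log (q i + δ)) ≤ ∑ i, q i * (ε / 2) := by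
          refine Finset.sum_le_sum fun i _ => ?_
          rcases (hq0 i).eq_or_lt with h0 | h0
          · simp [← h0]
          · refine mul_le_mul_of_nonneg_left ?_ h0.le
            rw [hsm]
            have hp := hpos i
            have hx : q i / ((q i + δ) / (1 + ε / 2)) ≤ 1 + ε / 2 := by
              rw [div_div_eq_mul_div, div_le_iff₀ hp]
              nlinarith [mul_pos hδ hε]
            have hx0 : 0 < q i / ((q i + δ) / (1 + ε / 2)) := by positivity
            linarith [Real.log_le_sub_one_of_pos hx0]
      _ = ε / 2 := by rw [← Finset.sum_mul, hq1, one_mul]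
      _ < ε := half_lt_self hε
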